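/- arXiv:2210.04967 — 3 statements merged into one kernel-verified Lean document; each statement's English description precedes it below -/
import Mathlib

section
/- Let H be a finite simple graph and let p, q ≥ 3 be integers with p + q = Δ(H) + 1. Let S ∈ F be chosen so that, among all members of F, the number of q-cliques of H[V(H) ∖ S] is minimum, and let K⁰ be a q-clique of H[V(H) ∖ S] containing a vertex v_0. Suppose there exist two distinct vertices y_0, y_0' ∈ A_{v_0} ∖ {v_0} such that for each y ∈ {y_0, y_0'} there is a q-clique K^y of H[((V(H) ∖ S) ∖ {v_0}) ∪ {y}] containing y with K^y ∩ K⁰ ≠ ∅. Then H contains a complete subgraph on Δ(H) − 1 vertices. -/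
/-- The number of `r`-cliques of `H` contained in the vertex set `W`
(i.e. the number of `r`-cliques of the induced subgraph `H[W]`). -/
noncomputable def cliqueCountOn {V : Type*} (H : SimpleGraph V) (W : Set V) (r : ℕ) : ℕ :=
  {t : Finset V | ↑t ⊆ W ∧ H.IsNClique r t}.ncard

/-- `S ∈ 𝓕`: `S` is a `K_p`-free subset of `V(H)` of maximum cardinality and, subject
to this, the number of `(p−1)`-cliques of `H[S]` is minimum. -/
def memF {V : Type*} (H : SimpleGraph V) (p : ℕ) (S : Set V) : Prop :=
  H.CliqueFreeOn S p ∧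
  (∀ W : Set V, H.CliqueFreeOn W p → W.ncard ≤ S.ncard) ∧
  (∀ W : Set V, H.CliqueFreeOn W p →
    (∀ U : Set V, H.CliqueFreeOn U p → U.ncard ≤ W.ncard) →
    cliqueCountOn H S (p - 1) ≤ cliqueCountOn H W (p - 1))

/-- `A_v`: the set of vertices `y ∈ S ∪ {v}` lying in every `p`-clique of
`H[S ∪ {v}]` that contains `v`. -/
def ASet {V : Type*} (H : SimpleGraph V) (p : ℕ) (S : Set V) (v : V) : Set V :=
  {y ∈ S ∪ {v} | ∀ t : Finset V, ↑t ⊆ S ∪ {v} → H.IsNClique p t → v ∈ t → y ∈ t}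

/-!
Since `S` is maximal, every `w ∉ S` is joined to a `(p - 1)`-clique of `S`; let `Q` be one for `v₀`
containing `y₀` and `y₀'`. With degrees at most `p + q - 1` there is almost no room left.

If `Kʸ \ {y} ⊈ K⁰` for some `y ∈ {y₀, y₀'}`, a vertex `w ∈ K⁰ ∩ Kʸ` has so many neighbours in
`K⁰ ∪ Kʸ` that only `p - 1` are left in `S`, and these form a clique through `y`. It must be `Q`:
otherwise exchanging `y` for `w` would decrease the number of `(p - 1)`-cliques of `S`. So `Q` is
joined to `K⁰ ∩ Kʸ` and to `v₀`, which gives a clique on `p + q - 2` vertices.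

Otherwise `y₀` and `y₀'` are joined to all of `K⁰`. Then `y₀` has at most one neighbour `u` in
`S \ Q`, so a `(p - 1)`-clique of `S` through `y₀` is `Q`, or `Q` with one vertex `a` replaced by
`u`; here `a` is determined, since two choices would make `u` joined to all of `Q`. A nonadjacent
pair `w ∈ K⁰`, `x ∈ Q` produces such a clique avoiding `x`, so all these `x` coincide with one
vertex `a`, and `K⁰ ∪ (Q \ {a})` is a clique.
-/

section Cliques

variable {V : Type*} {H : SimpleGraph V} {S : Set V} {m k : ℕ}

lemma not_cliqueFree_of_joined_cliques {A B : Finset V} (hA : H.IsClique A) (hB : H.IsClique B)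
    (hAB : ∀ x ∈ A, ∀ y ∈ B, H.Adj x y) (hk : k ≤ A.card + B.card) : ¬ H.CliqueFree k := by
  classical
  have hdisj : Disjoint A B := Finset.disjoint_left.2 fun x hxA hxB => (hAB x hxA x hxB).ne rfl
  have hclique : H.IsClique ↑(A ∪ B) := by
    rw [Finset.coe_union]
    exact Set.pairwise_union.2
      ⟨hA, hB, fun x hx y hy _ => ⟨hAB x hx y hy, (hAB x hx y hy).symm⟩⟩
  rw [← Finset.card_union_of_disjoint hdisj] at hk
  exact fun hfree => hfree.mono hk _ ⟨hclique, rfl⟩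

lemma coe_erase_subset_inter_neighborSet [DecidableEq V] {T : Set V} {w : V} {K : Finset V}
    (hKT : ↑K ⊆ T ∪ {w}) (hK : H.IsClique K) (hw : w ∈ K) :
    ↑(K.erase w) ⊆ T ∩ H.neighborSet w := by
  intro x hx
  obtain ⟨hxw, hxK⟩ := Finset.mem_erase.1 hx
  exact ⟨(hKT hxK).resolve_right hxw, hK hw hxK hxw.symm⟩

lemma exists_isNClique_mem_of_maximal (hS : Maximal (H.CliqueFreeOn · m) S) {w : V} (hw : w ∉ S) :
    ∃ Q : Finset V, ↑Q ⊆ S ∪ {w} ∧ H.IsNClique m Q ∧ w ∈ Q := by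
  have hnot : ¬ H.CliqueFreeOn (S ∪ {w}) m :=
    hS.not_prop_of_gt (by simpa only [Set.union_singleton] using Set.ssubset_insert hw)
  simp only [SimpleGraph.CliqueFreeOn, not_forall, not_not] at hnot
  obtain ⟨Q, hQS, hQ⟩ := hnot
  refine ⟨Q, hQS, hQ, by_contra fun hwQ => hS.prop (fun x hx => ?_) hQ⟩
  exact (hQS hx).resolve_right fun hxw => hwQ (hxw ▸ hx)

lemma exists_isNClique_subset_neighborSet_of_maximal
    (hS : Maximal (H.CliqueFreeOn · (m + 1)) S) {w : V} (hw : w ∉ S) :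
    ∃ C : Finset V, ↑C ⊆ S ∩ H.neighborSet w ∧ H.IsNClique m C := by
  classical
  obtain ⟨Q, hQS, hQ, hwQ⟩ := exists_isNClique_mem_of_maximal hS hw
  exact ⟨Q.erase w, coe_erase_subset_inter_neighborSet hQS hQ.isClique hwQ, hQ.erase_of_mem hwQ⟩

end Cliques

section Degrees

variable {V : Type*} {H : SimpleGraph V} {S : Set V} {m n : ℕ}

lemma ncard_inter_neighborSet_add_card_le_degree {w : V} [Fintype (H.neighborSet w)]
    {T : Finset V} (hT : ↑T ⊆ Sᶜ ∩ H.neighborSet w) :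
    (S ∩ H.neighborSet w).ncard + T.card ≤ H.degree w := by
  have hfin : (H.neighborSet w).Finite := Set.toFinite _
  have hdisj : Disjoint (S ∩ H.neighborSet w) (T : Set V) :=
    Set.disjoint_left.2 fun x hxS hxT => (hT hxT).1 hxS.1
  calc (S ∩ H.neighborSet w).ncard + T.card
      = (S ∩ H.neighborSet w ∪ T).ncard := by
        rw [Set.ncard_union_eq hdisj (hfin.inter_of_right _) T.finite_toSet, Set.ncard_coe_finset]
    _ ≤ (H.neighborSet w).ncard := Set.ncard_le_ncard
        (Set.union_subset Set.inter_subset_right (hT.trans Set.inter_subset_right)) hfin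
    _ = H.degree w := by rw [Set.ncard_eq_toFinset_card', Set.toFinset_card,
        SimpleGraph.card_neighborSet_eq_degree]

lemma ncard_inter_neighborSet_add_card_union_le [DecidableEq V] {w : V}
    [Fintype (H.neighborSet w)] {K L : Finset V} (hKS : ↑K ⊆ Sᶜ) (hLS : ↑L ⊆ Sᶜ)
    (hK : H.IsClique K) (hL : H.IsClique L) (hwK : w ∈ K) (hwL : w ∈ L) :
    (S ∩ H.neighborSet w).ncard + (K ∪ L).card ≤ H.degree w + 1 := by
  have hT : ↑((K ∪ L).erase w) ⊆ Sᶜ ∩ H.neighborSet w := by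
    rw [Finset.erase_union_distrib, Finset.coe_union]
    exact Set.union_subset
      (coe_erase_subset_inter_neighborSet (hKS.trans Set.subset_union_left) hK hwK)
      (coe_erase_subset_inter_neighborSet (hLS.trans Set.subset_union_left) hL hwL)
  have hdeg := ncard_inter_neighborSet_add_card_le_degree hT
  rw [Finset.card_erase_of_mem (Finset.mem_union_left _ hwK)] at hdeg
  omega

lemma ncard_inter_neighborSet_le_of_joined {w : V} [Fintype (H.neighborSet w)] {K : Finset V}
    (hw : H.degree w ≤ m + n) (hKS : ↑K ⊆ Sᶜ) (hK : K.card = n) (hwK : ↑K ⊆ H.neighborSet w) :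
    (S ∩ H.neighborSet w).ncard ≤ m := by
  have := ncard_inter_neighborSet_add_card_le_degree (Set.subset_inter hKS hwK)
  omega

lemma subsingleton_inter_neighborSet_sdiff {Q : Finset V} {y : V} [Finite (H.neighborSet y)]
    (hQS : ↑Q ⊆ S) (hQ : H.IsNClique m Q) (hyQ : y ∈ Q)
    (hy : (S ∩ H.neighborSet y).ncard ≤ m) : ((S ∩ H.neighborSet y) \ Q).Subsingleton := by
  classical
  have hfin : (S ∩ H.neighborSet y).Finite := (Set.toFinite _).inter_of_right _
  have hsub : ↑(Q.erase y) ⊆ S ∩ H.neighborSet y :=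
    coe_erase_subset_inter_neighborSet (hQS.trans Set.subset_union_left) hQ.isClique hyQ
  have hcard := Set.ncard_sdiff_add_ncard_of_subset hsub hfin
  rw [Set.ncard_coe_finset, Finset.card_erase_of_mem hyQ, hQ.card_eq] at hcard
  have hle : ((S ∩ H.neighborSet y) \ ↑(Q.erase y)).ncard ≤ 1 := by
    have := Finset.card_pos.2 ⟨y, hyQ⟩
    rw [hQ.card_eq] at this
    omega
  intro u hu u' hu'
  exact (Set.ncard_le_one (hfin.subset Set.sdiff_subset)).1 hle
    u ⟨hu.1, fun h => hu.2 (Finset.mem_of_mem_erase h)⟩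
    u' ⟨hu'.1, fun h => hu'.2 (Finset.mem_of_mem_erase h)⟩

lemma exists_eq_insert_erase_of_isNClique [DecidableEq V] {C Q : Finset V} {y a : V}
    [Finite (H.neighborSet y)] (hQS : ↑Q ⊆ S) (hQ : H.IsNClique m Q) (hyQ : y ∈ Q)
    (hy : (S ∩ H.neighborSet y).ncard ≤ m) (hCS : ↑C ⊆ S) (hC : H.IsNClique m C) (hyC : y ∈ C)
    (ha : a ∈ Q \ C) : ∃ u ∈ (S ∩ H.neighborSet y) \ Q, C = insert u (Q.erase a) := by
  have hCQ : ↑(C \ Q) ⊆ (S ∩ H.neighborSet y) \ Q := by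
    intro x hx
    obtain ⟨hxC, hxQ⟩ := Finset.mem_sdiff.1 hx
    exact ⟨⟨hCS hxC, hC.isClique hyC hxC fun h => hxQ (h ▸ hyQ)⟩, hxQ⟩
  have hcard : (Q \ C).card = (C \ Q).card :=
    Finset.card_sdiff_comm (hQ.card_eq.trans hC.card_eq.symm)
  obtain ⟨u, hu⟩ : (C \ Q).Nonempty :=
    Finset.card_pos.1 (hcard ▸ Finset.card_pos.2 ⟨a, ha⟩)
  have hone : (Q \ C).card ≤ 1 := hcard ▸ Finset.card_le_one_iff_subsingleton.2
    ((subsingleton_inter_neighborSet_sdiff hQS hQ hyQ hy).anti hCQ)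
  refine ⟨u, hCQ hu, (Finset.eq_of_subset_of_card_le ?_ ?_).symm⟩
  · refine Finset.insert_subset (Finset.mem_sdiff.1 hu).1 fun x hx => by_contra fun hxC => ?_
    obtain ⟨hxa, hxQ⟩ := Finset.mem_erase.1 hx
    exact hxa (Finset.card_le_one.1 hone x (Finset.mem_sdiff.2 ⟨hxQ, hxC⟩) a ha)
  · rw [Finset.card_insert_of_notMem fun h => (hCQ hu).2 (Finset.mem_of_mem_erase h),
      Finset.card_erase_add_one (Finset.mem_sdiff.1 ha).1, hC.card_eq, hQ.card_eq]

lemma eq_of_mem_sdiff_of_mem_sdiff [DecidableEq V] {C D Q : Finset V} {y a b : V}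
    [Finite (H.neighborSet y)] (hS : H.CliqueFreeOn S (m + 1)) (hQS : ↑Q ⊆ S)
    (hQ : H.IsNClique m Q) (hyQ : y ∈ Q) (hy : (S ∩ H.neighborSet y).ncard ≤ m)
    (hCS : ↑C ⊆ S) (hC : H.IsNClique m C) (hyC : y ∈ C)
    (hDS : ↑D ⊆ S) (hD : H.IsNClique m D) (hyD : y ∈ D)
    (ha : a ∈ Q \ C) (hb : b ∈ Q \ D) : a = b := by
  obtain ⟨u, hu, rfl⟩ := exists_eq_insert_erase_of_isNClique hQS hQ hyQ hy hCS hC hyC ha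
  obtain ⟨u', hu', rfl⟩ := exists_eq_insert_erase_of_isNClique hQS hQ hyQ hy hDS hD hyD hb
  obtain rfl := subsingleton_inter_neighborSet_sdiff hQS hQ hyQ hy hu hu'
  by_contra hab
  have hadj : ∀ x ∈ Q, H.Adj u x := by
    intro x hxQ
    have hux : u ≠ x := fun h => hu.2 (h ▸ hxQ)
    rcases eq_or_ne x a with rfl | hxa
    · exact hD.isClique (by simp) (by simp [hxQ, hab]) hux
    · exact hC.isClique (by simp) (by simp [hxQ, hxa]) hux
  refine hS ?_ (hQ.insert hadj)
  rw [Finset.coe_insert]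
  exact Set.insert_subset hu.1.1 hQS

end Degrees

section Swap

variable {V : Type*} {H : SimpleGraph V} {S : Set V} {w y : V} {m : ℕ}

lemma coe_subset_of_isClique_of_subset_swap {t : Finset V}
    (htS : ↑t ⊆ insert w (S \ {y})) (ht : H.IsClique t) (hwt : w ∈ t) :
    ↑t ⊆ insert w ((S ∩ H.neighborSet w) \ {y}) := by
  intro x hx
  rcases eq_or_ne x w with rfl | hxw
  · exact Set.mem_insert _ _
  · have hxS := (htS hx).resolve_left hxw
    exact Or.inr ⟨⟨hxS.1, ht hwt hx hxw.symm⟩, hxS.2⟩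

variable [Finite (H.neighborSet w)]

lemma coe_eq_of_isNClique_of_subset_swap {t : Finset V} (hyw : y ∈ S ∩ H.neighborSet w)
    (hw : (S ∩ H.neighborSet w).ncard ≤ m) (htS : ↑t ⊆ insert w (S \ {y}))
    (ht : H.IsNClique m t) (hwt : w ∈ t) : ↑t = insert w ((S ∩ H.neighborSet w) \ {y}) := by
  have hfin : (S ∩ H.neighborSet w).Finite := (Set.toFinite _).inter_of_right _
  refine Set.eq_of_subset_of_ncard_le
    (coe_subset_of_isClique_of_subset_swap htS ht.isClique hwt) ?_ (hfin.sdiff.insert w)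
  rwa [Set.ncard_exchange (fun h => H.irrefl h.2) hyw, Set.ncard_coe_finset, ht.card_eq]

lemma cliqueFreeOn_swap (hS : H.CliqueFreeOn S (m + 1)) (hyw : y ∈ S ∩ H.neighborSet w)
    (hw : (S ∩ H.neighborSet w).ncard ≤ m) : H.CliqueFreeOn (insert w (S \ {y})) (m + 1) := by
  intro t htS ht
  by_cases hwt : w ∈ t
  · have hcard := congrArg Set.ncard
      (coe_eq_of_isNClique_of_subset_swap hyw (hw.trans m.le_succ) htS ht hwt)
    rw [Set.ncard_exchange (fun h => H.irrefl h.2) hyw, Set.ncard_coe_finset, ht.card_eq] at hcard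
    omega
  · have htSy := (Set.subset_insert_iff_of_notMem (Finset.mem_coe.not.2 hwt)).1 htS
    exact hS (htSy.trans Set.sdiff_subset) ht

end Swap

section Extremal

variable {V : Type*} [Finite V] {H : SimpleGraph V} {S : Set V} {m : ℕ}

lemma memF.maximal (hS : memF H m S) : Maximal (H.CliqueFreeOn · m) S :=
  ⟨hS.1, fun W hW hSW => (Set.eq_of_subset_of_ncard_le hSW (hS.2.1 W hW)).ge⟩

lemma memF.cliqueCountOn_le_swap {w y : V} (hS : memF H (m + 1) S) (hwS : w ∉ S)
    (hyw : y ∈ S ∩ H.neighborSet w) (hw : (S ∩ H.neighborSet w).ncard ≤ m) :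
    cliqueCountOn H S m ≤ cliqueCountOn H (insert w (S \ {y})) m := by
  refine hS.2.2 _ (cliqueFreeOn_swap hS.1 hyw hw) fun U hU => ?_
  rw [Set.ncard_exchange hwS hyw.1]
  exact hS.2.1 U hU

-- Exchanging `y` for `w` destroys every `m`-clique through `y` and creates at most one.
lemma memF.isNClique_unique {w y : V} {C D : Finset V} (hS : memF H (m + 1) S) (hwS : w ∉ S)
    (hyw : y ∈ S ∩ H.neighborSet w) (hw : (S ∩ H.neighborSet w).ncard ≤ m)
    (hCS : ↑C ⊆ S) (hC : H.IsNClique m C) (hyC : y ∈ C)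
    (hDS : ↑D ⊆ S) (hD : H.IsNClique m D) (hyD : y ∈ D) : C = D := by
  by_contra hCD
  let old : Set (Finset V) := {t | ↑t ⊆ S ∧ H.IsNClique m t}
  let new : Set (Finset V) := {t | ↑t ⊆ insert w (S \ {y}) ∧ H.IsNClique m t ∧ w ∈ t}
  have hsub : {t : Finset V | ↑t ⊆ insert w (S \ {y}) ∧ H.IsNClique m t} ⊆
      (old \ {C, D}) ∪ new := by
    rintro t ⟨htS, ht⟩
    by_cases hwt : w ∈ t
    · exact Or.inr ⟨htS, ht, hwt⟩
    · have htSy := (Set.subset_insert_iff_of_notMem (Finset.mem_coe.not.2 hwt)).1 htS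
      have hyt : y ∉ t := fun hyt => (htSy hyt).2 rfl
      refine Or.inl ⟨⟨htSy.trans Set.sdiff_subset, ht⟩, ?_⟩
      rintro (rfl | rfl) <;> contradiction
  have hnew : new.ncard ≤ 1 := Set.ncard_le_one_iff_subsingleton.2 fun s hs t ht =>
    Finset.coe_injective ((coe_eq_of_isNClique_of_subset_swap hyw hw hs.1 hs.2.1 hs.2.2).trans
      (coe_eq_of_isNClique_of_subset_swap hyw hw ht.1 ht.2.1 ht.2.2).symm)
  have hold : (old \ {C, D}).ncard + 2 = old.ncard := by
    have := Set.ncard_sdiff_add_ncard_of_subset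
      (Set.pair_subset (show C ∈ old from ⟨hCS, hC⟩) (show D ∈ old from ⟨hDS, hD⟩))
    rwa [Set.ncard_pair hCD] at this
  have hswap : old.ncard ≤ (old \ {C, D}).ncard + new.ncard :=
    calc old.ncard ≤ cliqueCountOn H (insert w (S \ {y})) m :=
          hS.cliqueCountOn_le_swap hwS hyw hw
      _ ≤ (old \ {C, D} ∪ new).ncard := Set.ncard_le_ncard hsub
      _ ≤ (old \ {C, D}).ncard + new.ncard := Set.ncard_union_le _ _
  omega

lemma memF.subset_neighborSet (hS : memF H (m + 1) S) {w y : V} {Q : Finset V}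
    (hwS : w ∉ S) (hyw : y ∈ H.neighborSet w)
    (hw : (S ∩ H.neighborSet w).ncard ≤ m) (hQS : ↑Q ⊆ S)
    (hQ : H.IsNClique m Q) (hyQ : y ∈ Q) : ↑Q ⊆ H.neighborSet w := by
  obtain ⟨C, hCS, hC⟩ := exists_isNClique_subset_neighborSet_of_maximal hS.maximal hwS
  have hCeq : (C : Set V) = S ∩ H.neighborSet w :=
    Set.eq_of_subset_of_ncard_le hCS (by rwa [Set.ncard_coe_finset, hC.card_eq])
  have hyC : y ∈ C := Finset.mem_coe.1 (hCeq ▸ ⟨hQS hyQ, hyw⟩)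
  obtain rfl : C = Q := hS.isNClique_unique hwS ⟨hQS hyQ, hyw⟩ hw
    (hCS.trans Set.inter_subset_left) hC hyC hQS hQ hyQ
  exact hCS.trans Set.inter_subset_right

end Extremal

section Configuration

variable {V : Type*} {H : SimpleGraph V} [H.LocallyFinite] {S : Set V} {m n : ℕ}
  {K L Q : Finset V}

lemma exists_isNClique_mem_notMem_of_not_adj (hS : Maximal (H.CliqueFreeOn · (m + 1)) S)
    (hΔ : ∀ w, H.degree w ≤ m + n + 1) (hKS : ↑K ⊆ Sᶜ) (hK : H.IsNClique (n + 1) K)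
    (hQS : ↑Q ⊆ S) (hQ : H.IsNClique m Q) {y z : V} (hyz : y ≠ z) (hyQ : y ∈ Q) (hzQ : z ∈ Q)
    (hyK : ↑K ⊆ H.neighborSet y) (hzK : ↑K ⊆ H.neighborSet z)
    {w a : V} (hwK : w ∈ K) (haQ : a ∈ Q) (hwa : ¬ H.Adj w a) :
    ∃ C : Finset V, ↑C ⊆ S ∧ H.IsNClique m C ∧ y ∈ C ∧ a ∉ C := by
  classical
  obtain ⟨C, hCS, hC⟩ := exists_isNClique_subset_neighborSet_of_maximal hS (hKS hwK)
  have haC : a ∉ C := fun h => hwa (hCS h).2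
  refine ⟨C, hCS.trans Set.inter_subset_left, hC, by_contra fun hyC => ?_, haC⟩
  have hwy : H.Adj w y := (hyK hwK).symm
  have hzC : z ∈ C := by
    by_contra hzC
    have hsub : ↑(insert y (insert z C)) ⊆ S ∩ H.neighborSet w := by
      rw [Finset.coe_insert, Finset.coe_insert]
      exact Set.insert_subset ⟨hQS hyQ, hwy⟩ (Set.insert_subset ⟨hQS hzQ, (hzK hwK).symm⟩ hCS)
    have hlow := Set.ncard_le_ncard hsub ((Set.toFinite _).inter_of_right _)
    have hup := ncard_inter_neighborSet_add_card_union_le hKS hKS hK.isClique hK.isClique hwK hwK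
    rw [Finset.union_self, hK.card_eq] at hup
    rw [Set.ncard_coe_finset, Finset.card_insert_of_notMem (by simp [hyz, hyC]),
      Finset.card_insert_of_notMem hzC, hC.card_eq] at hlow
    have := hΔ w
    omega
  have hz : (S ∩ H.neighborSet z).ncard ≤ m :=
    ncard_inter_neighborSet_le_of_joined (hΔ z) hKS hK.card_eq hzK
  have hCS' : ↑C ⊆ S := hCS.trans Set.inter_subset_left
  have hay : a = y := eq_of_mem_sdiff_of_mem_sdiff hS.prop hQS hQ hzQ hz hCS' hC hzC hCS' hC hzC
    (Finset.mem_sdiff.2 ⟨haQ, haC⟩) (Finset.mem_sdiff.2 ⟨hyQ, hyC⟩)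
  exact hwa (hay ▸ hwy)

lemma not_cliqueFree_of_pair_joined (hS : Maximal (H.CliqueFreeOn · (m + 1)) S)
    (hΔ : ∀ w, H.degree w ≤ m + n + 1) (hKS : ↑K ⊆ Sᶜ) (hK : H.IsNClique (n + 1) K)
    (hQS : ↑Q ⊆ S) (hQ : H.IsNClique m Q) {y z : V} (hyz : y ≠ z) (hyQ : y ∈ Q) (hzQ : z ∈ Q)
    (hyK : ↑K ⊆ H.neighborSet y) (hzK : ↑K ⊆ H.neighborSet z) : ¬ H.CliqueFree (m + n) := by
  classical
  have hy : (S ∩ H.neighborSet y).ncard ≤ m :=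
    ncard_inter_neighborSet_le_of_joined (hΔ y) hKS hK.card_eq hyK
  have hunique : ∀ w ∈ K, ∀ a ∈ Q, ¬ H.Adj w a → ∀ w' ∈ K, ∀ a' ∈ Q, ¬ H.Adj w' a' → a = a' := by
    intro w hw a ha hwa w' hw' a' ha' hwa'
    obtain ⟨C, hCS, hC, hyC, haC⟩ :=
      exists_isNClique_mem_notMem_of_not_adj hS hΔ hKS hK hQS hQ hyz hyQ hzQ hyK hzK hw ha hwa
    obtain ⟨D, hDS, hD, hyD, haD⟩ :=
      exists_isNClique_mem_notMem_of_not_adj hS hΔ hKS hK hQS hQ hyz hyQ hzQ hyK hzK hw' ha' hwa'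
    exact eq_of_mem_sdiff_of_mem_sdiff hS.prop hQS hQ hyQ hy hCS hC hyC hDS hD hyD
      (Finset.mem_sdiff.2 ⟨ha, haC⟩) (Finset.mem_sdiff.2 ⟨ha', haD⟩)
  obtain ⟨a, ha, hadj⟩ : ∃ a ∈ Q, ∀ w ∈ K, ∀ x ∈ Q.erase a, H.Adj w x := by
    by_cases hall : ∀ w ∈ K, ∀ x ∈ Q, H.Adj w x
    · exact ⟨y, hyQ, fun w hw x hx => hall w hw x (Finset.mem_of_mem_erase hx)⟩
    · push Not at hall
      obtain ⟨w, hw, a, ha, hwa⟩ := hall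
      refine ⟨a, ha, fun w' hw' x hx => by_contra fun hwx => ?_⟩
      obtain ⟨hxa, hxQ⟩ := Finset.mem_erase.1 hx
      exact hxa (hunique w' hw' x hxQ hwx w hw a ha hwa)
  refine not_cliqueFree_of_joined_cliques hK.isClique (hQ.erase_of_mem ha).isClique hadj ?_
  rw [hK.card_eq, (hQ.erase_of_mem ha).card_eq]
  omega

lemma le_card_inter_add_one [DecidableEq V] (hS : Maximal (H.CliqueFreeOn · (m + 1)) S)
    (hΔ : ∀ w, H.degree w ≤ m + n + 1) (hKS : ↑K ⊆ Sᶜ) (hK : H.IsNClique (n + 1) K)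
    (hLS : ↑L ⊆ Sᶜ) (hL : H.IsNClique n L) (hKL : ¬ Disjoint K L) : n ≤ (K ∩ L).card + 1 := by
  obtain ⟨w, hwK, hwL⟩ := Finset.not_disjoint_iff.1 hKL
  obtain ⟨C, hCS, hC⟩ := exists_isNClique_subset_neighborSet_of_maximal hS (hKS hwK)
  have hlow := Set.ncard_le_ncard hCS ((Set.toFinite _).inter_of_right _)
  have hup := ncard_inter_neighborSet_add_card_union_le hKS hLS hK.isClique hL.isClique hwK hwL
  have hcard := Finset.card_union_add_card_inter K L
  rw [Set.ncard_coe_finset, hC.card_eq] at hlow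
  rw [hK.card_eq, hL.card_eq] at hcard
  have := hΔ w
  omega

lemma not_cliqueFree_of_not_subset [Finite V] (hS : memF H (m + 1) S)
    (hΔ : ∀ w, H.degree w ≤ m + n + 1) (hKS : ↑K ⊆ Sᶜ) (hK : H.IsNClique (n + 1) K)
    {v y : V} (hvK : v ∈ K) (hQS : ↑Q ⊆ S ∩ H.neighborSet v) (hQ : H.IsNClique m Q) (hyQ : y ∈ Q)
    (hLS : ↑L ⊆ (Sᶜ \ {v}) ∩ H.neighborSet y) (hL : H.IsNClique n L) (hKL : ¬ Disjoint K L)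
    (hLK : ¬ L ⊆ K) : ¬ H.CliqueFree (m + n) := by
  classical
  have hLS' : ↑L ⊆ Sᶜ := hLS.trans (Set.inter_subset_left.trans Set.sdiff_subset)
  have hvL : v ∉ L := fun h => (hLS h).1.2 rfl
  have hlt : n + 1 < (K ∪ L).card := by
    rw [← hK.card_eq]
    refine Finset.card_lt_card (Finset.ssubset_iff_subset_ne.2 ⟨Finset.subset_union_left, ?_⟩)
    exact fun h => hLK (Finset.union_eq_left.1 h.symm)
  have hadj : ∀ w ∈ K ∩ L, ∀ x ∈ Q, H.Adj w x := by
    intro w hw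
    obtain ⟨hwK, hwL⟩ := Finset.mem_inter.1 hw
    have hdeg : (S ∩ H.neighborSet w).ncard ≤ m := by
      have hup :=
        ncard_inter_neighborSet_add_card_union_le hKS hLS' hK.isClique hL.isClique hwK hwL
      have := hΔ w
      omega
    exact hS.subset_neighborSet (hKS hwK) (hLS hwL).2.symm hdeg
      (hQS.trans Set.inter_subset_left) hQ hyQ
  have hclique : H.IsClique ↑(insert v (K ∩ L)) := hK.isClique.subset
    (Finset.coe_subset.2 (Finset.insert_subset hvK Finset.inter_subset_left))
  refine not_cliqueFree_of_joined_cliques hclique hQ.isClique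
    ((Finset.forall_mem_insert _ _ _).2 ⟨fun x hx => (hQS hx).2, hadj⟩) ?_
  rw [Finset.card_insert_of_notMem fun h => hvL (Finset.mem_inter.1 h).2, hQ.card_eq, add_comm m]
  exact Nat.add_le_add_right (le_card_inter_add_one hS.maximal hΔ hKS hK hLS' hL hKL) m

lemma subset_neighborSet_of_cliqueFree [Finite V] (hS : memF H (m + 1) S)
    (hΔ : ∀ w, H.degree w ≤ m + n + 1) (hKS : ↑K ⊆ Sᶜ) (hK : H.IsNClique (n + 1) K)
    {v y : V} (hvK : v ∈ K) (hQS : ↑Q ⊆ S ∩ H.neighborSet v) (hQ : H.IsNClique m Q) (hyQ : y ∈ Q)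
    (hLS : ↑L ⊆ (Sᶜ \ {v}) ∩ H.neighborSet y) (hL : H.IsNClique n L) (hKL : ¬ Disjoint K L)
    (hfree : H.CliqueFree (m + n)) : ↑K ⊆ H.neighborSet y := by
  classical
  have hLK : L ⊆ K := by_contra fun hLK =>
    not_cliqueFree_of_not_subset hS hΔ hKS hK hvK hQS hQ hyQ hLS hL hKL hLK hfree
  have hvL : v ∉ L := fun h => (hLS h).1.2 rfl
  have hKeq : insert v L = K := Finset.eq_of_subset_of_card_le (Finset.insert_subset hvK hLK)
    (by rw [Finset.card_insert_of_notMem hvL, hL.card_eq, hK.card_eq])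
  rw [← hKeq, Finset.coe_insert]
  exact Set.insert_subset (hQS hyQ).2.symm (hLS.trans Set.inter_subset_right)

end Configuration

theorem statement10_general {V : Type*} [Fintype V] [DecidableEq V]
    (H : SimpleGraph V) [DecidableRel H.Adj] (p q : ℕ) (hpq : H.maxDegree < p + q)
    (S : Set V) (hSF : memF H p S) (v₀ : V)
    (K₀ : Finset V) (hK₀ : ↑K₀ ⊆ Sᶜ) (hK₀clique : H.IsNClique q K₀) (hv₀K₀ : v₀ ∈ K₀)
    (Q : Finset V) (hQS : ↑Q ⊆ S ∪ {v₀}) (hQ : H.IsNClique p Q) (hv₀Q : v₀ ∈ Q)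
    (y₀ y₀' : V) (hne : y₀ ≠ y₀') (hy₀ : y₀ ∈ Q.erase v₀) (hy₀' : y₀' ∈ Q.erase v₀)
    (hcl : ∀ y ∈ ({y₀, y₀'} : Set V), ∃ Ky : Finset V,
      ↑Ky ⊆ (Sᶜ \ {v₀}) ∪ {y} ∧ H.IsNClique q Ky ∧ y ∈ Ky ∧ (Ky ∩ K₀).Nonempty) :
    ∃ t : Finset V, H.IsNClique (p + q - 2) t := by
  obtain ⟨m, rfl⟩ : ∃ m, p = m + 1 :=
    Nat.exists_eq_add_one.2 (hQ.card_eq ▸ Finset.card_pos.2 ⟨v₀, hv₀Q⟩)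
  obtain ⟨n, rfl⟩ : ∃ n, q = n + 1 :=
    Nat.exists_eq_add_one.2 (hK₀clique.card_eq ▸ Finset.card_pos.2 ⟨v₀, hv₀K₀⟩)
  have hΔ : ∀ w, H.degree w ≤ m + n + 1 := fun w => (H.degree_le_maxDegree w).trans (by omega)
  have hQv := hQ.erase_of_mem hv₀Q
  have hQvS := coe_erase_subset_inter_neighborSet hQS hQ.isClique hv₀Q
  have hQvS' := hQvS.trans Set.inter_subset_left
  suffices ¬ H.CliqueFree (m + n) by
    simpa only [SimpleGraph.CliqueFree, not_forall, not_not,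
      show m + 1 + (n + 1) - 2 = m + n by omega] using this
  intro hfree
  have hjoined : ∀ y ∈ ({y₀, y₀'} : Set V), y ∈ Q.erase v₀ → ↑K₀ ⊆ H.neighborSet y := by
    intro y hy hyQ
    obtain ⟨Ky, hKyS, hKy, hyKy, w, hw⟩ := hcl y hy
    obtain ⟨hwKy, hwK₀⟩ := Finset.mem_inter.1 hw
    have hwy : w ≠ y := fun h => hK₀ hwK₀ (h ▸ hQvS' hyQ)
    exact subset_neighborSet_of_cliqueFree hSF hΔ hK₀ hK₀clique hv₀K₀ hQvS hQv hyQ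
      (coe_erase_subset_inter_neighborSet hKyS hKy.isClique hyKy) (hKy.erase_of_mem hyKy)
      (Finset.not_disjoint_iff.2 ⟨w, hwK₀, Finset.mem_erase.2 ⟨hwy, hwKy⟩⟩) hfree
  exact not_cliqueFree_of_pair_joined hSF.maximal hΔ hK₀ hK₀clique hQvS' hQv hne hy₀ hy₀'
    (hjoined y₀ (by simp) hy₀) (hjoined y₀' (by simp) hy₀') hfree

/-- Let `p, q ≥ 3` with `p + q = Δ(H) + 1`, let `S ∈ 𝓕` minimize the number of
`q`-cliques of `H[V ∖ S]` among all members of `𝓕`, and let `K⁰` be a `q`-clique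
of `H[V ∖ S]` containing `v₀`. Suppose there are two distinct vertices
`y₀, y₀' ∈ A_{v₀} ∖ {v₀}` such that for each of them there is a `q`-clique `Kʸ`
of `H[((V ∖ S) ∖ {v₀}) ∪ {y}]` containing `y` with `Kʸ ∩ K⁰ ≠ ∅`. Then `H`
contains a complete subgraph on `Δ(H) − 1` vertices. -/
theorem statement10 {V : Type*} [Fintype V] [DecidableEq V]
    (H : SimpleGraph V) [DecidableRel H.Adj]
    (p q : ℕ) (hp : 3 ≤ p) (hq : 3 ≤ q) (hpq : p + q = H.maxDegree + 1)
    (S : Set V) (hSF : memF H p S)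
    (hSmin : ∀ T : Set V, memF H p T → cliqueCountOn H Sᶜ q ≤ cliqueCountOn H Tᶜ q)
    (v₀ : V)
    (K₀ : Finset V) (hK₀ : ↑K₀ ⊆ Sᶜ) (hK₀clique : H.IsNClique q K₀) (hv₀K₀ : v₀ ∈ K₀)
    (y₀ y₀' : V) (hne : y₀ ≠ y₀')
    (hy₀ : y₀ ∈ ASet H p S v₀ \ {v₀}) (hy₀' : y₀' ∈ ASet H p S v₀ \ {v₀})
    (hcl : ∀ y ∈ ({y₀, y₀'} : Set V), ∃ Ky : Finset V,
      ↑Ky ⊆ (Sᶜ \ {v₀}) ∪ {y} ∧ H.IsNClique q Ky ∧ y ∈ Ky ∧ (Ky ∩ K₀).Nonempty) :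
    ∃ t : Finset V, H.IsNClique (H.maxDegree - 1) t := by
  obtain ⟨Q, hQS, hQ, hv₀Q⟩ := exists_isNClique_mem_of_maximal hSF.maximal (hK₀ hv₀K₀)
  have hAQ : ∀ y ∈ ASet H p S v₀ \ {v₀}, y ∈ Q.erase v₀ := fun y hy =>
    Finset.mem_erase.2 ⟨hy.2, hy.1.2 Q hQS hQ hv₀Q⟩
  rw [show H.maxDegree - 1 = p + q - 2 by omega]
  exact statement10_general H p q (by omega) S hSF v₀ K₀ hK₀ hK₀clique hv₀K₀ Q hQS hQ hv₀Q
    y₀ y₀' hne (hAQ y₀ hy₀) (hAQ y₀' hy₀') hcl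
end

section
/- Let H_1 be the simple graph on vertices v_1, …, v_8 whose edges are exactly v_1v_2, v_1v_3, v_1v_6, v_1v_8, v_2v_3, v_2v_4, v_2v_5, v_3v_4, v_3v_5, v_4v_6, v_4v_7, v_5v_7, v_5v_8, v_6v_7, v_6v_8, v_7v_8. Then H_1 is 4-regular (so Δ(H_1) = 4), ω(H_1) = 3 ≤ Δ(H_1) − 1, and there is no partition of V(H_1) into two sets V_1 and V_2 such that H_1[V_1] is K_3-free and V_2 is an independent set (i.e., H_1[V_2] is K_2-free). -/
/-- The graph `H₁` on vertices `v₁, …, v₈` (represented as `0, …, 7 : Fin 8`) with the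
sixteen edges `v₁v₂, v₁v₃, v₁v₆, v₁v₈, v₂v₃, v₂v₄, v₂v₅, v₃v₄, v₃v₅, v₄v₆, v₄v₇,
v₅v₇, v₅v₈, v₆v₇, v₆v₈, v₇v₈`. -/
def graphH₁ : SimpleGraph (Fin 8) :=
  SimpleGraph.fromRel (fun a b => (a, b) ∈
    ([(0, 1), (0, 2), (0, 5), (0, 7), (1, 2), (1, 3), (1, 4), (2, 3), (2, 4), (3, 5),
      (3, 6), (4, 6), (4, 7), (5, 6), (5, 7), (6, 7)] : List (Fin 8 × Fin 8)))

instance : DecidableRel graphH₁.Adj :=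
  fun a b => inferInstanceAs (Decidable (a ≠ b ∧ (_ ∨ _)))

/-!
Write `H₁` with `A = {v₂, v₃}` an edge, `c = (v₁, v₄, v₅)` and `d = (v₇, v₈, v₆)` a triangle: every
`cᵢ` is adjacent to both ends of `A`, and to `dⱼ` exactly when `i ≠ j`. Suppose an independent set
`I` meets every triangle, in particular in some `dⱼ`. If some `cᵢ` lies in `I`, then `A` avoids `I`,
so the triangles `A ∪ {cₖ}` force every `cₖ` into `I`, and `cₖ` is adjacent to `dⱼ` for `k ≠ j`.
If no `cᵢ` lies in `I`, then the triangle `{cⱼ} ∪ {dₖ | k ≠ j}` forces a second `dₖ` into `I`,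
and it is adjacent to `dⱼ`.
-/

section Cliques

variable {V : Type*} {G : SimpleGraph V} {s : Finset V} {I : Set V} {n : ℕ}

theorem cliqueNum_eq_of_isNClique_of_cliqueFree_succ [Finite V] (hs : G.IsNClique n s)
    (hG : G.CliqueFree (n + 1)) : G.cliqueNum = n := by
  obtain ⟨t, ht⟩ := G.exists_isNClique_cliqueNum
  apply le_antisymm
  · by_contra! hlt
    exact hG.mono hlt t ht
  · exact hs.card_eq ▸ hs.isClique.card_le_cliqueNum

theorem isNClique_image_of_pairwise_adj {ι : Type*} [DecidableEq V] {d : ι → V}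
    (hd : Pairwise fun i j ↦ G.Adj (d i) (d j)) (t : Finset ι) :
    G.IsNClique t.card (t.image d) := by
  have d_injective : Function.Injective d := Function.injective_iff_pairwise_ne.2
    fun _ _ hij ↦ (hd hij).ne
  refine ⟨?_, Finset.card_image_of_injective t d_injective⟩
  rw [Finset.coe_image]
  rintro _ ⟨i, -, rfl⟩ _ ⟨j, -, rfl⟩ hij
  exact hd (ne_of_apply_ne d hij)

theorem exists_mem_of_isNClique_of_cliqueFreeOn_compl (hfree : G.CliqueFreeOn Iᶜ n)
    (hs : G.IsNClique n s) : ∃ x ∈ s, x ∈ I := by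
  by_contra! hdisj
  exact hfree hdisj hs

theorem not_adj_of_mem_of_isIndepSet (hI : G.IsIndepSet I) {x y : V} (hx : x ∈ I) (hy : y ∈ I) :
    ¬ G.Adj x y :=
  fun h ↦ hI hx hy h.ne h

end Cliques

/-- An `n`-clique `A` and two families `c`, `d` of `n + 1` vertices such that every `c i` is joined
to all of `A`, the `d j` form an `(n + 1)`-clique, and `c i` is joined to `d j` whenever `i ≠ j`.
For `n ≠ 0` it obstructs a partition into a `K_{n+1}`-free set and an independent set. Other
adjacencies are left open, so it need not be an induced subgraph. -/
structure IsCliqueCrown {V : Type*} (G : SimpleGraph V) (n : ℕ) (A : Finset V)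
    (c d : Fin (n + 1) → V) : Prop where
  isNClique : G.IsNClique n A
  c_adj_clique : ∀ i, ∀ a ∈ A, G.Adj (c i) a
  d_pairwise_adj : Pairwise fun i j ↦ G.Adj (d i) (d j)
  c_adj_d : Pairwise fun i j ↦ G.Adj (c i) (d j)

namespace IsCliqueCrown

variable {V : Type*} {G : SimpleGraph V} {I : Set V} {n : ℕ} {A : Finset V} {c d : Fin (n + 1) → V}

theorem c_mem_of_c_mem (h : IsCliqueCrown G n A c d) (hI : G.IsIndepSet I)
    (hfree : G.CliqueFreeOn Iᶜ (n + 1)) {i : Fin (n + 1)} (hi : c i ∈ I) (k : Fin (n + 1)) :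
    c k ∈ I := by
  classical
  obtain ⟨x, hx, hxI⟩ := exists_mem_of_isNClique_of_cliqueFreeOn_compl hfree
    (h.isNClique.insert (h.c_adj_clique k))
  obtain rfl | hxA := Finset.mem_insert.1 hx
  · exact hxI
  · exact absurd (h.c_adj_clique i x hxA) (not_adj_of_mem_of_isIndepSet hI hi hxI)

theorem exists_d_mem (h : IsCliqueCrown G n A c d) (hfree : G.CliqueFreeOn Iᶜ (n + 1)) :
    ∃ j, d j ∈ I := by
  classical
  have d_clique : G.IsNClique (n + 1) (Finset.univ.image d) := by
    simpa only [Finset.card_fin]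
      using isNClique_image_of_pairwise_adj h.d_pairwise_adj Finset.univ
  obtain ⟨x, hx, hxI⟩ := exists_mem_of_isNClique_of_cliqueFreeOn_compl hfree d_clique
  obtain ⟨j, -, rfl⟩ := Finset.mem_image.1 hx
  exact ⟨j, hxI⟩

theorem exists_ne_d_mem_of_c_notMem (h : IsCliqueCrown G n A c d)
    (hfree : G.CliqueFreeOn Iᶜ (n + 1)) {i : Fin (n + 1)} (hi : c i ∉ I) : ∃ j ≠ i, d j ∈ I := by
  classical
  have d_clique : G.IsNClique n ((Finset.univ.erase i).image d) := by
    simpa only [Finset.card_erase_of_mem (Finset.mem_univ i), Finset.card_fin, Nat.add_sub_cancel]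
      using isNClique_image_of_pairwise_adj h.d_pairwise_adj (Finset.univ.erase i)
  have c_adj : ∀ b ∈ (Finset.univ.erase i).image d, G.Adj (c i) b :=
    Finset.forall_mem_image.2 fun j hj ↦ h.c_adj_d (Finset.ne_of_mem_erase hj).symm
  obtain ⟨x, hx, hxI⟩ :=
    exists_mem_of_isNClique_of_cliqueFreeOn_compl hfree (d_clique.insert c_adj)
  obtain rfl | hxd := Finset.mem_insert.1 hx
  · exact absurd hxI hi
  · obtain ⟨j, hj, rfl⟩ := Finset.mem_image.1 hxd
    exact ⟨j, Finset.ne_of_mem_erase hj, hxI⟩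

theorem not_cliqueFreeOn_compl (h : IsCliqueCrown G n A c d) (hn : n ≠ 0)
    (hI : G.IsIndepSet I) : ¬ G.CliqueFreeOn Iᶜ (n + 1) := by
  intro hfree
  obtain ⟨j, hj⟩ := h.exists_d_mem hfree
  by_cases hc : ∃ i, c i ∈ I
  · obtain ⟨i, hi⟩ := hc
    have : Nontrivial (Fin (n + 1)) := Fin.nontrivial_iff_two_le.2 (by lia)
    obtain ⟨k, hkj⟩ := exists_ne j
    exact not_adj_of_mem_of_isIndepSet hI (h.c_mem_of_c_mem hI hfree hi k) hj (h.c_adj_d hkj)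
  · obtain ⟨k, hkj, hk⟩ := h.exists_ne_d_mem_of_c_notMem hfree (not_exists.1 hc j)
    exact not_adj_of_mem_of_isIndepSet hI hk hj (h.d_pairwise_adj hkj)

end IsCliqueCrown

theorem graphH₁_isRegularOfDegree : graphH₁.IsRegularOfDegree 4 := by
  unfold SimpleGraph.IsRegularOfDegree
  decide

theorem graphH₁_cliqueFree_four : graphH₁.CliqueFree 4 := by
  unfold SimpleGraph.CliqueFree
  decide +kernel

theorem graphH₁_cliqueNum : graphH₁.cliqueNum = 3 :=
  have triangle : graphH₁.IsNClique 3 {0, 1, 2} := by decide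
  cliqueNum_eq_of_isNClique_of_cliqueFree_succ triangle graphH₁_cliqueFree_four

theorem graphH₁_isCliqueCrown : IsCliqueCrown graphH₁ 2 {1, 2} ![0, 3, 4] ![6, 7, 5] where
  isNClique := by decide
  c_adj_clique := by decide
  d_pairwise_adj := by
    unfold Pairwise
    decide
  c_adj_d := by
    unfold Pairwise
    decide

/-- `H₁` is `4`-regular (so `Δ(H₁) = 4`), has clique number `3 ≤ Δ(H₁) − 1`, and there
is no partition of `V(H₁)` into sets `V₁, V₂` such that `H₁[V₁]` is `K₃`-free and `V₂`
is an independent set (i.e. `H₁[V₂]` is `K₂`-free). -/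
theorem statement13 :
    (∀ v : Fin 8, graphH₁.degree v = 4) ∧
    graphH₁.maxDegree = 4 ∧
    graphH₁.cliqueNum = 3 ∧ graphH₁.cliqueNum ≤ graphH₁.maxDegree - 1 ∧
    ¬ ∃ V₁ V₂ : Set (Fin 8), V₁ ∪ V₂ = Set.univ ∧ Disjoint V₁ V₂ ∧
      graphH₁.CliqueFreeOn V₁ 3 ∧ graphH₁.CliqueFreeOn V₂ 2 := by
  have hΔ : graphH₁.maxDegree = 4 := graphH₁_isRegularOfDegree.maxDegree_eq
  refine ⟨graphH₁_isRegularOfDegree, hΔ, graphH₁_cliqueNum, ?_, ?_⟩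
  · rw [graphH₁_cliqueNum, hΔ]
  · rintro ⟨V₁, V₂, hcover, -, hV₁, hV₂⟩
    have compl_subset : V₂ᶜ ⊆ V₁ := Set.compl_subset_iff_union.2 (Set.union_comm V₁ V₂ ▸ hcover)
    have indep : graphH₁.IsIndepSet V₂ := graphH₁.cliqueFreeOn_two.1 hV₂
    exact graphH₁_isCliqueCrown.not_cliqueFreeOn_compl two_ne_zero indep
      (hV₁.subset graphH₁ compl_subset)
end

section
/- Let H_0 be the graph obtained from the complete graph K_8 on vertices v_1, …, v_8 by adding, for each i with 1 ≤ i ≤ 8, two new vertices w_i and w_i' joined only to v_i. Then Δ(H_0) = 9, ω(H_0) = 8 ≤ Δ(H_0) − 1, χ(H_0) = 8, the independence number of H_0 is 16, the set {w_i, w_i' : 1 ≤ i ≤ 8} is the unique maximum independent set of H_0, and there is no proper coloring of H_0 with Δ(H_0) − 1 = 8 colors in which some color class is a maximum independent set of H_0. -/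
/-- The base relation for `H₀`: the vertices `v₁, …, v₈` are `Sum.inl i`, and the two
pendant vertices `wᵢ, wᵢ'` attached to `vᵢ` are `Sum.inr (i, 0)` and `Sum.inr (i, 1)`.
Distinct `vᵢ`'s are all joined (a `K₈`), and `wᵢ, wᵢ'` are joined exactly to `vᵢ`. -/
def relH₀ : Fin 8 ⊕ Fin 8 × Fin 2 → Fin 8 ⊕ Fin 8 × Fin 2 → Prop := fun x y =>
  match x, y with
  | Sum.inl i, Sum.inl j => i ≠ j
  | Sum.inl i, Sum.inr (j, _) => i = j
  | _, _ => False

instance : DecidableRel relH₀ := fun x y =>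
  match x, y with
  | Sum.inl i, Sum.inl j => inferInstanceAs (Decidable (i ≠ j))
  | Sum.inl i, Sum.inr (j, _) => inferInstanceAs (Decidable (i = j))
  | Sum.inr _, Sum.inl _ => inferInstanceAs (Decidable False)
  | Sum.inr _, Sum.inr _ => inferInstanceAs (Decidable False)

/-- The graph `H₀` obtained from `K₈` on `v₁, …, v₈` by adding, for each `i`, two new
vertices `wᵢ, wᵢ'` joined only to `vᵢ`. -/
def graphH₀ : SimpleGraph (Fin 8 ⊕ Fin 8 × Fin 2) := SimpleGraph.fromRel relH₀

instance : DecidableRel graphH₀.Adj :=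
  fun a b => inferInstanceAs (Decidable (a ≠ b ∧ (relH₀ a b ∨ relH₀ b a)))

/-!
Let `G` be any graph with an edge, and hang at least two pendant vertices on each of its vertices.
Replacing every vertex of `G` in an independent set by one of its own pendant neighbours is
injective and leaves its other pendant neighbours uncovered, so the pendant vertices form the
only maximum independent set. On the other hand, a colouring with `χ(G)` colours already uses every
colour on `G`, so no colour class consists of pendant vertices alone. The graph `H₀` is the case
`G = K₈` with two pendant vertices at each vertex.
-/

open SimpleGraph

section Graph

variable {V : Type*} {G : SimpleGraph V}

lemma cliqueFreeOn_two_iff_isIndepSet {s : Set V} : G.CliqueFreeOn s 2 ↔ G.IsIndepSet s :=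
  cliqueFreeOn_two G

lemma exists_coloring_forall_colorClass_eq {α : Type*} {C : α → Set V} (hC : ∀ x, ∃! i, x ∈ C i)
    (hind : ∀ i, G.IsIndepSet (C i)) : ∃ c : G.Coloring α, ∀ i, c.colorClass i = C i := by
  choose c hc hc_unique using hC
  have valid {x y : V} (hxy : G.Adj x y) : c x ≠ c y := fun h =>
    hind (c x) (hc x) (h ▸ hc y) hxy.ne hxy
  refine ⟨Coloring.mk c valid, fun i => Set.ext fun x => ⟨?_, fun hx => (hc_unique x i hx).symm⟩⟩
  rintro rfl
  exact hc x

lemma two_le_cliqueNum_of_ne_bot [Finite V] (hG : G ≠ ⊥) : 2 ≤ G.cliqueNum := by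
  classical
  obtain ⟨u, v, huv⟩ := ne_bot_iff_exists_adj.mp hG
  have hclique : G.IsClique ({u, v} : Finset V) := by simp [huv]
  exact Finset.card_pair huv.ne ▸ hclique.card_le_cliqueNum

lemma cliqueNum_le_of_embedding {V' : Type*} [Finite V'] {G' : SimpleGraph V'} (f : G ↪g G') :
    G.cliqueNum ≤ G'.cliqueNum := by
  obtain ⟨t, ht⟩ := G.exists_isNClique_cliqueNum
  have hclique : G'.IsClique (t.map f.toEmbedding) := by
    rw [Finset.coe_map]
    exact f.injective.injOn.pairwise_image.mpr fun _ hu _ hv huv =>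
      f.map_adj_iff.mpr (ht.isClique hu hv huv)
  rw [← ht.card_eq, ← t.card_map f.toEmbedding]
  exact hclique.card_le_cliqueNum

lemma cliqueNum_top [Fintype V] : (⊤ : SimpleGraph V).cliqueNum = Fintype.card V := by
  obtain ⟨t, ht⟩ := (⊤ : SimpleGraph V).exists_isNClique_cliqueNum
  have hclique : (⊤ : SimpleGraph V).IsClique (Finset.univ : Finset V) := fun _ _ _ _ h => h
  exact le_antisymm (ht.card_eq ▸ t.card_le_univ) hclique.card_le_cliqueNum

lemma cliqueNum_le_maxDegree_add_one [Fintype V] [DecidableRel G.Adj] :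
    G.cliqueNum ≤ G.maxDegree + 1 := by
  classical
  obtain ⟨t, ht⟩ := G.exists_isNClique_cliqueNum
  rw [← ht.card_eq]
  obtain rfl | ⟨v, hv⟩ := t.eq_empty_or_nonempty
  · simp
  have hsub : t.erase v ⊆ G.neighborFinset v := fun u hu =>
    (G.mem_neighborFinset v u).mpr <|
      ht.isClique hv (Finset.mem_of_mem_erase hu) (Finset.ne_of_mem_erase hu).symm
  calc t.card = (t.erase v).card + 1 := (Finset.card_erase_add_one hv).symm
    _ ≤ G.degree v + 1 := Nat.succ_le_succ (Finset.card_le_card hsub)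
    _ ≤ G.maxDegree + 1 := Nat.succ_le_succ (G.degree_le_maxDegree v)

end Graph

/-- The corona of `G` with the edgeless graph on `W`: every vertex `v` of `G`, encoded as
`Sum.inl v`, receives one pendant neighbour `Sum.inr (v, w)` for each `w : W`. -/
def pendantCorona {V : Type*} (G : SimpleGraph V) (W : Type*) : SimpleGraph (V ⊕ V × W) where
  Adj
    | Sum.inl u, Sum.inl v => G.Adj u v
    | Sum.inl u, Sum.inr p => u = p.1
    | Sum.inr p, Sum.inl v => v = p.1
    | Sum.inr _, Sum.inr _ => False
  symm := ⟨by rintro (u | p) (v | q) h; exacts [G.adj_symm h, h, h, h]⟩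
  loopless := ⟨by rintro (u | p) h; exacts [G.loopless.irrefl u h, h]⟩

namespace pendantCorona

variable {V W : Type*} {G : SimpleGraph V}

@[simp]
lemma adj_inl_inl {u v : V} : (pendantCorona G W).Adj (Sum.inl u) (Sum.inl v) ↔ G.Adj u v :=
  Iff.rfl

@[simp]
lemma adj_inl_inr {u : V} {p : V × W} :
    (pendantCorona G W).Adj (Sum.inl u) (Sum.inr p) ↔ u = p.1 :=
  Iff.rfl

@[simp]
lemma adj_inr_inl {v : V} {p : V × W} :
    (pendantCorona G W).Adj (Sum.inr p) (Sum.inl v) ↔ v = p.1 :=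
  Iff.rfl

@[simp]
lemma not_adj_inr_inr {p q : V × W} : ¬ (pendantCorona G W).Adj (Sum.inr p) (Sum.inr q) :=
  id

/-- The inclusion of `G` into its corona, as an induced subgraph. -/
def inlEmbedding : G ↪g pendantCorona G W where
  toEmbedding := Function.Embedding.inl
  map_rel_iff' := Iff.rfl

section Degree

variable [Fintype V] [Fintype W] [DecidableRel (pendantCorona G W).Adj]

lemma degree_inr (p : V × W) : (pendantCorona G W).degree (Sum.inr p) = 1 := by
  have hnbr : (pendantCorona G W).neighborFinset (Sum.inr p) = {Sum.inl p.1} := by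
    ext (u | q) <;> simp
  rw [← card_neighborFinset_eq_degree, hnbr, Finset.card_singleton]

variable [DecidableRel G.Adj]

lemma degree_inl (v : V) :
    (pendantCorona G W).degree (Sum.inl v) = G.degree v + Fintype.card W := by
  have hnbr : (pendantCorona G W).neighborFinset (Sum.inl v) =
      (G.neighborFinset v).disjSum ({v} ×ˢ Finset.univ) := by
    ext (u | p) <;> simp [Prod.ext_iff, eq_comm]
  rw [← card_neighborFinset_eq_degree, hnbr]
  simp

lemma maxDegree_eq [Nonempty V] [Nonempty W] :
    (pendantCorona G W).maxDegree = G.maxDegree + Fintype.card W := by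
  refine le_antisymm (maxDegree_le_of_forall_degree_le _ _ ?_) ?_
  · rintro (v | p)
    · rw [degree_inl]
      exact Nat.add_le_add_right (G.degree_le_maxDegree v) _
    · rw [degree_inr]
      exact Fintype.card_pos.trans_le (Nat.le_add_left _ _)
  · obtain ⟨v, hv⟩ := G.exists_maximal_degree_vertex
    rw [hv, ← degree_inl]
    exact degree_le_maxDegree _ _

end Degree

section Clique

lemma subset_pair_of_isClique {s : Set (V ⊕ V × W)} (hs : (pendantCorona G W).IsClique s)
    {p : V × W} (hp : Sum.inr p ∈ s) : s ⊆ {Sum.inl p.1, Sum.inr p} := by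
  intro x hx
  by_cases hpx : Sum.inr p = x
  · exact Or.inr hpx.symm
  · have hadj := hs hp hx hpx
    rcases x with u | q
    · exact Or.inl (congrArg Sum.inl (adj_inr_inl.mp hadj))
    · exact absurd hadj not_adj_inr_inr

variable [Finite V]

lemma card_le_cliqueNum_of_isClique (hG : G ≠ ⊥) {t : Finset (V ⊕ V × W)}
    (ht : (pendantCorona G W).IsClique t) : t.card ≤ G.cliqueNum := by
  classical
  obtain hright | ⟨p, hp⟩ := t.toRight.eq_empty_or_nonempty
  · have hleft : G.IsClique t.toLeft := fun u hu v hv huv =>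
      ht (Finset.mem_toLeft.mp hu) (Finset.mem_toLeft.mp hv) (Sum.inl_injective.ne huv)
    calc t.card = t.toLeft.card := by simp [← t.card_toLeft_add_card_toRight, hright]
      _ ≤ G.cliqueNum := hleft.card_le_cliqueNum
  · have hsub : t ⊆ {Sum.inl p.1, Sum.inr p} := by
      rw [← Finset.coe_subset, Finset.coe_pair]
      exact subset_pair_of_isClique ht (Finset.mem_toRight.mp hp)
    calc t.card ≤ 2 := (Finset.card_le_card hsub).trans Finset.card_le_two
      _ ≤ G.cliqueNum := two_le_cliqueNum_of_ne_bot hG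

lemma cliqueNum_eq [Finite W] (hG : G ≠ ⊥) : (pendantCorona G W).cliqueNum = G.cliqueNum := by
  obtain ⟨t, ht⟩ := (pendantCorona G W).exists_isNClique_cliqueNum
  exact le_antisymm (ht.card_eq ▸ card_le_cliqueNum_of_isClique hG ht.isClique)
    (cliqueNum_le_of_embedding inlEmbedding)

end Clique

section Coloring

lemma colorable {n : ℕ} (hn : 2 ≤ n) (hG : G.Colorable n) :
    (pendantCorona G W).Colorable n := by
  obtain ⟨c⟩ := hG
  have : Nontrivial (Fin n) := Fin.nontrivial_iff_two_le.mpr hn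
  choose other hother using fun i : Fin n => exists_ne i
  refine ⟨Coloring.mk (Sum.elim c fun p => other (c p.1)) ?_⟩
  rintro (u | p) (v | q) hadj
  · exact c.valid hadj
  · obtain rfl := adj_inl_inr.mp hadj
    exact (hother _).symm
  · obtain rfl := adj_inr_inl.mp hadj
    exact hother _
  · exact absurd hadj not_adj_inr_inr

lemma chromaticNumber_eq (hG : G ≠ ⊥) :
    (pendantCorona G W).chromaticNumber = G.chromaticNumber := by
  refine le_antisymm (chromaticNumber_le_of_forall_imp fun n hn => ?_)
    (chromaticNumber_mono_of_hom (inlEmbedding (W := W)).toHom)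
  have htwo : (2 : ℕ∞) ≤ n := (two_le_chromaticNumber_iff_ne_bot.mpr hG).trans hn.chromaticNumber_le
  exact colorable (by exact_mod_cast htwo) hn

lemma exists_inl_mem_colorClass {α : Type*} [Fintype α] (hα : Fintype.card α ≤ G.chromaticNumber)
    (c : (pendantCorona G W).Coloring α) (i : α) : ∃ v, Sum.inl v ∈ c.colorClass i :=
  card_le_chromaticNumber_iff_forall_surjective.mp hα (c.comp inlEmbedding.toHom) i

end Coloring

section IndepSet

lemma isIndepSet_range_inr : (pendantCorona G W).IsIndepSet (Set.range Sum.inr) := by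
  rintro _ ⟨p, rfl⟩ _ ⟨q, rfl⟩ -
  exact not_adj_inr_inr

/-- Moves every vertex of `G` to its pendant neighbour with label `w`, fixing all pendant
vertices: an exchange which embeds any independent set into the set of pendant vertices. -/
def toPendant (w : W) : V ⊕ V × W → V × W :=
  Sum.elim (fun v => (v, w)) id

variable {s : Set (V ⊕ V × W)}

lemma injOn_toPendant (hs : (pendantCorona G W).IsIndepSet s) (w : W) :
    Set.InjOn (toPendant w) s := by
  rintro (u | p) hx (v | q) hy hxy
  · exact congrArg Sum.inl (Prod.ext_iff.mp hxy).1
  · exact absurd (Prod.ext_iff.mp hxy).1 (hs hx hy Sum.inl_ne_inr)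
  · exact absurd (Prod.ext_iff.mp hxy).1.symm (hs hx hy Sum.inr_ne_inl)
  · exact congrArg Sum.inr hxy

variable [Fintype V] [Fintype W]

lemma ncard_range_inr :
    (Set.range (Sum.inr : V × W → V ⊕ V × W)).ncard = Fintype.card V * Fintype.card W := by
  rw [Set.ncard_range_of_injective Sum.inr_injective, Nat.card_eq_fintype_card, Fintype.card_prod]

lemma ncard_le_of_isIndepSet [Nonempty W] (hs : (pendantCorona G W).IsIndepSet s) :
    s.ncard ≤ Fintype.card V * Fintype.card W := by
  obtain ⟨w⟩ := ‹Nonempty W›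
  rw [← (injOn_toPendant hs w).ncard_image, ← Fintype.card_prod, ← Nat.card_eq_fintype_card]
  exact Set.ncard_le_card _

lemma eq_range_inr_of_isIndepSet [Nontrivial W] (hs : (pendantCorona G W).IsIndepSet s)
    (hcard : Fintype.card V * Fintype.card W ≤ s.ncard) : s = Set.range Sum.inr := by
  obtain ⟨w, w', hw⟩ := exists_pair_ne W
  have himage : toPendant w '' s = Set.univ := by
    apply Set.eq_of_subset_of_ncard_le (Set.subset_univ _)
    rwa [(injOn_toPendant hs w).ncard_image, Set.ncard_univ, Nat.card_eq_fintype_card,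
      Fintype.card_prod]
  have hsub : s ⊆ Set.range Sum.inr := by
    rintro (v | p) hv
    · obtain ⟨u | q, hx, hxv⟩ : (v, w') ∈ toPendant w '' s := himage ▸ Set.mem_univ _
      · exact absurd (Prod.ext_iff.mp hxv).2 hw
      · exact absurd (Prod.ext_iff.mp hxv).1.symm (hs hv hx Sum.inl_ne_inr)
    · exact ⟨p, rfl⟩
  exact Set.eq_of_subset_of_ncard_le hsub (ncard_range_inr.trans_le hcard)

end IndepSet

end pendantCorona

lemma graphH₀_eq_pendantCorona : graphH₀ = pendantCorona ⊤ (Fin 2) := by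
  ext (i | p) (j | q) <;> simp +contextual [graphH₀, relH₀]

open pendantCorona in
theorem statement14_general {V W : Type*} [Fintype V] [Fintype W] [Nontrivial W]
    (G : SimpleGraph V) [DecidableRel G.Adj] [DecidableRel (pendantCorona G W).Adj] (hG : G ≠ ⊥)
    {n : ℕ} (hn : G.chromaticNumber = n) :
    (pendantCorona G W).maxDegree = G.maxDegree + Fintype.card W ∧
    (pendantCorona G W).cliqueNum = G.cliqueNum ∧
    (pendantCorona G W).cliqueNum ≤ (pendantCorona G W).maxDegree - 1 ∧
    (pendantCorona G W).chromaticNumber = n ∧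
    (pendantCorona G W).CliqueFreeOn (Set.range Sum.inr) 2 ∧
    (Set.range (Sum.inr : V × W → V ⊕ V × W)).ncard = Fintype.card V * Fintype.card W ∧
    (∀ s : Set (V ⊕ V × W), (pendantCorona G W).CliqueFreeOn s 2 →
      s.ncard ≤ Fintype.card V * Fintype.card W) ∧
    (∀ s : Set (V ⊕ V × W), (pendantCorona G W).CliqueFreeOn s 2 →
      s.ncard = Fintype.card V * Fintype.card W → s = Set.range Sum.inr) ∧
    ¬ ∃ C : Fin n → Set (V ⊕ V × W),
        (∀ x, ∃! i, x ∈ C i) ∧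
        (∀ i, (pendantCorona G W).CliqueFreeOn (C i) 2) ∧
        ∃ i, ∀ s : Set (V ⊕ V × W),
          (pendantCorona G W).CliqueFreeOn s 2 → s.ncard ≤ (C i).ncard := by
  have : Nonempty V := let ⟨v, _⟩ := ne_bot_iff_exists_adj.mp hG; ⟨v⟩
  simp only [cliqueFreeOn_two_iff_isIndepSet]
  refine ⟨maxDegree_eq, cliqueNum_eq hG, ?_,
    (chromaticNumber_eq hG).trans hn, isIndepSet_range_inr,
    ncard_range_inr, fun s hs => ncard_le_of_isIndepSet hs,
    fun s hs hcard => eq_range_inr_of_isIndepSet hs hcard.ge, ?_⟩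
  · rw [cliqueNum_eq hG, maxDegree_eq]
    have hclique := cliqueNum_le_maxDegree_add_one (G := G)
    have hW := Fintype.one_lt_card (α := W)
    omega
  · rintro ⟨C, hC, hind, i, hmax⟩
    obtain ⟨c, hc⟩ := exists_coloring_forall_colorClass_eq hC hind
    obtain ⟨v, hv⟩ := exists_inl_mem_colorClass (by simp [hn]) c i
    have hi : C i = Set.range Sum.inr := eq_range_inr_of_isIndepSet (hind i)
      (ncard_range_inr.ge.trans (hmax _ isIndepSet_range_inr))
    rw [hc, hi] at hv
    obtain ⟨p, hp⟩ := hv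
    exact Sum.inr_ne_inl hp

/-- `Δ(H₀) = 9`, `ω(H₀) = 8 ≤ Δ(H₀) − 1`, `χ(H₀) = 8`, the independence number of `H₀`
is `16`, the set `{wᵢ, wᵢ' : 1 ≤ i ≤ 8}` is the unique maximum independent set of `H₀`,
and there is no proper coloring of `H₀` with `Δ(H₀) − 1 = 8` colors in which some color
class is a maximum independent set of `H₀`. -/
theorem statement14 :
    graphH₀.maxDegree = 9 ∧
    graphH₀.cliqueNum = 8 ∧ graphH₀.cliqueNum ≤ graphH₀.maxDegree - 1 ∧
    graphH₀.chromaticNumber = 8 ∧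
    -- the independence number of `H₀` is `16`, witnessed by the set of pendant vertices
    graphH₀.CliqueFreeOn (Set.range Sum.inr) 2 ∧
    (Set.range (Sum.inr : Fin 8 × Fin 2 → Fin 8 ⊕ Fin 8 × Fin 2)).ncard = 16 ∧
    (∀ s : Set (Fin 8 ⊕ Fin 8 × Fin 2), graphH₀.CliqueFreeOn s 2 → s.ncard ≤ 16) ∧
    -- uniqueness of the maximum independent set
    (∀ s : Set (Fin 8 ⊕ Fin 8 × Fin 2), graphH₀.CliqueFreeOn s 2 → s.ncard = 16 →
      s = Set.range Sum.inr) ∧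
    -- no proper `8`-coloring has a color class which is a maximum independent set
    ¬ ∃ C : Fin 8 → Set (Fin 8 ⊕ Fin 8 × Fin 2),
        (∀ x, ∃! i, x ∈ C i) ∧
        (∀ i, graphH₀.CliqueFreeOn (C i) 2) ∧
        ∃ i, ∀ s : Set (Fin 8 ⊕ Fin 8 × Fin 2),
          graphH₀.CliqueFreeOn s 2 → s.ncard ≤ (C i).ncard := by
  classical
  simpa [← graphH₀_eq_pendantCorona, cliqueNum_top] using
    statement14_general (W := Fin 2) (⊤ : SimpleGraph (Fin 8)) top_ne_bot (n := 8) (by simp)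
end
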